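/- Let Ω ⊆ ℍ be a domain, θ ∈ [0,2π), and u, v ∈ ℍ. Suppose $K_u : Ω × Ω → ℍ$ is a reproducing kernel for ${}_{λ^θ_u}𝒜(Ω)$, i.e., $f(z) = ∫_Ω K_u(z,ζ)\,f(ζ)\,e^{2⟨u,ζ⟩_θ}dμ_ζ$ for all f ∈ ${}_{λ^θ_u}𝒜(Ω)$ and all z ∈ Ω. Then $K_v(z,ζ) := e^{⟨u−v,\,z+ζ⟩_θ}\,K_u(z,ζ)$ is a reproducing kernel for ${}_{λ^θ_v}𝒜(Ω)$: for all f ∈ ${}_{λ^θ_v}𝒜(Ω)$ and all z ∈ Ω, $f(z) = ∫_Ω K_v(z,ζ)\,f(ζ)\,e^{2⟨v,ζ⟩_θ}dμ_ζ$. -/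

import Mathlib

open MeasureTheory

noncomputable section

/-- The real quaternions `ℍ`. -/
abbrev H4 : Type := Quaternion ℝ

instance : MeasurableSpace H4 := borel _
instance : BorelSpace H4 := ⟨rfl⟩

/-- The quaternion unit `i`. -/
def qI : H4 := ⟨0, 1, 0, 0⟩
/-- The quaternion unit `j`. -/
def qJ : H4 := ⟨0, 0, 1, 0⟩
/-- `e^{iθ} = cos θ + (sin θ) i` as a quaternion. -/
def eIθ (θ : ℝ) : H4 := ⟨Real.cos θ, Real.sin θ, 0, 0⟩
/-- The basis direction `i e^{iθ} j`. -/
def e2 (θ : ℝ) : H4 := qI * eIθ θ * qJ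
/-- The basis direction `e^{iθ} j`. -/
def e3 (θ : ℝ) : H4 := eIθ θ * qJ

/-- Third θ-coordinate of a quaternion `z = x₀ + x₁ i + x₂ (i e^{iθ} j) + x₃ (e^{iθ} j)`. -/
def x2θ (θ : ℝ) (z : H4) : ℝ := -z.imJ * Real.sin θ + z.imK * Real.cos θ
/-- Fourth θ-coordinate of a quaternion. -/
def x3θ (θ : ℝ) (z : H4) : ℝ := z.imJ * Real.cos θ + z.imK * Real.sin θ

/-- The θ-inner product `⟨u,z⟩_θ`: the dot product of θ-coordinates. -/
def innerθ (θ : ℝ) (u z : H4) : ℝ :=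
  u.re * z.re + u.imI * z.imI + x2θ θ u * x2θ θ z + x3θ θ u * x3θ θ z

/-- Left θ-Cauchy–Riemann operator
`{}^θ𝒟 f = ∂f/∂x₀ + i ∂f/∂x₁ + (i e^{iθ} j) ∂f/∂x₂ + (e^{iθ} j) ∂f/∂x₃`. -/
def Dl (θ : ℝ) (f : H4 → H4) (z : H4) : H4 :=
  fderiv ℝ f z 1 + qI * fderiv ℝ f z qI + e2 θ * fderiv ℝ f z (e2 θ) +
    e3 θ * fderiv ℝ f z (e3 θ)

/-- Left (θ,u)-Cauchy–Riemann operator `{}^θ_u𝒟 f = {}^θ𝒟 f + u f`. -/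
def Dlu (θ : ℝ) (u : H4) (f : H4 → H4) (z : H4) : H4 := Dl θ f z + u * f z

/-- Right θ-Cauchy–Riemann operator. -/
def Dr (θ : ℝ) (f : H4 → H4) (z : H4) : H4 :=
  fderiv ℝ f z 1 + fderiv ℝ f z qI * qI + fderiv ℝ f z (e2 θ) * e2 θ +
    fderiv ℝ f z (e3 θ) * e3 θ

/-- Right (θ,u)-Cauchy–Riemann operator `{}^θ𝒟_{r,u} f = {}^θ𝒟_r f + f u`. -/
def Dru (θ : ℝ) (u : H4) (f : H4 → H4) (z : H4) : H4 := Dr θ f z + f z * u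

/-- Embedding of ℂ into the quaternions, `ℂ ≅ ℝ + ℝi ⊂ ℍ`. -/
def toH (a : ℂ) : H4 := ⟨a.re, a.im, 0, 0⟩

/-- First complex θ-component of a quaternion: `z₁ = x₀ + x₁ i`. -/
def c1 (z : H4) : ℂ := ⟨z.re, z.imI⟩
/-- Second complex θ-component of a quaternion: `z₂ = x₂ + x₃ i`. -/
def c2 (θ : ℝ) (z : H4) : ℂ := ⟨x2θ θ z, x3θ θ z⟩

/-- Wirtinger operator `∂/∂z̄₁ = ∂/∂x₀ + i ∂/∂x₁` on ℂ-valued functions. -/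
def db1 (f : H4 → ℂ) (z : H4) : ℂ := fderiv ℝ f z 1 + Complex.I * fderiv ℝ f z qI
/-- Wirtinger operator `∂/∂z̄₂ = ∂/∂x₂ + i ∂/∂x₃` on ℂ-valued functions. -/
def db2 (θ : ℝ) (f : H4 → ℂ) (z : H4) : ℂ :=
  fderiv ℝ f z (e2 θ) + Complex.I * fderiv ℝ f z (e3 θ)
/-- Wirtinger operator `∂/∂z₂ = ∂/∂x₂ − i ∂/∂x₃` on ℂ-valued functions. -/
def dz2 (θ : ℝ) (f : H4 → ℂ) (z : H4) : ℂ :=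
  fderiv ℝ f z (e2 θ) - Complex.I * fderiv ℝ f z (e3 θ)

/-- `e^{iθ}` as a complex number. -/
def cexpI (θ : ℝ) : ℂ := ⟨Real.cos θ, Real.sin θ⟩

/-- The weighted Bergman space `{}_{λ^θ_u}𝒜(Ω)`: C¹ null solutions of `{}^θ_u𝒟` with
`∫_Ω |f|² e^{2⟨u,·⟩_θ} dμ < ∞`. -/
def memLA (θ : ℝ) (u : H4) (Ω : Set H4) (f : H4 → H4) : Prop :=
  ContDiffOn ℝ 1 f Ω ∧ (∀ z ∈ Ω, Dlu θ u f z = 0) ∧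
    IntegrableOn (fun z => ‖f z‖ ^ 2 * Real.exp (2 * innerθ θ u z)) Ω volume

/-!
The `θ`-directions `1, i, ie^{iθ}j, e^{iθ}j` form an orthonormal basis of `ℍ`, so `⟨·,·⟩_θ` is
the Euclidean inner product and `{}^θ𝒟 φ` is the gradient of `φ` when `φ` is real-valued. As real
scalars are central, `{}^θ𝒟 (φ f) = φ {}^θ𝒟 f + (∇φ) f`; for `φ = e^{⟨w,·⟩}` one has `∇φ = φ w`,
so multiplication by `e^{⟨v-u,·⟩}` intertwines `{}^θ_v𝒟` with `{}^θ_u𝒟`. It also absorbs the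
change of weight, hence maps `{}_{λ^θ_v}𝒜(Ω)` isometrically into `{}_{λ^θ_u}𝒜(Ω)`, and the kernel
is conjugated accordingly.
-/

open scoped RealInnerProductSpace

theorem hasGradientAt_exp_inner {E : Type*} [NormedAddCommGroup E] [InnerProductSpace ℝ E]
    [CompleteSpace E] (w z : E) :
    HasGradientAt (fun y => Real.exp ⟪w, y⟫) (Real.exp ⟪w, z⟫ • w) z := by
  rw [hasGradientAt_iff_hasFDerivAt, map_smul]
  exact (InnerProductSpace.toDual ℝ E w).hasFDerivAt.exp

theorem norm_exp_smul_sq_mul_exp {E : Type*} [SeminormedAddCommGroup E] [NormedSpace ℝ E]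
    (a b : ℝ) (x : E) :
    ‖Real.exp a • x‖ ^ 2 * Real.exp (2 * (b - a)) = ‖x‖ ^ 2 * Real.exp (2 * b) := by
  have exp_split : Real.exp (2 * b) = Real.exp a ^ 2 * Real.exp (2 * (b - a)) := by
    rw [← Real.exp_nat_mul, ← Real.exp_add]
    congr 1
    push_cast
    ring
  rw [norm_smul, Real.norm_eq_abs, Real.abs_exp, exp_split]
  ring

theorem e2_eq_mk (θ : ℝ) : e2 θ = ⟨0, 0, -Real.sin θ, Real.cos θ⟩ := by
  apply Quaternion.ext <;>
    simp only [e2, Quaternion.re_mul, Quaternion.imI_mul, Quaternion.imJ_mul,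
      Quaternion.imK_mul] <;>
    simp [qI, eIθ, qJ]

theorem e3_eq_mk (θ : ℝ) : e3 θ = ⟨0, 0, Real.cos θ, Real.sin θ⟩ := by
  apply Quaternion.ext <;>
    simp only [e3, Quaternion.re_mul, Quaternion.imI_mul, Quaternion.imJ_mul,
      Quaternion.imK_mul] <;>
    simp [eIθ, qJ]

theorem quaternion_inner_eq (a b : H4) :
    ⟪a, b⟫ = a.re * b.re + a.imI * b.imI + a.imJ * b.imJ + a.imK * b.imK := by
  simp [Quaternion.inner_def]

theorem innerθ_eq_inner (θ : ℝ) (u z : H4) : innerθ θ u z = ⟪u, z⟫ := by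
  rw [quaternion_inner_eq, innerθ, x2θ, x2θ, x3θ, x3θ]
  linear_combination (u.imJ * z.imJ + u.imK * z.imK) * Real.sin_sq_add_cos_sq θ

theorem sum_inner_smul_θbasis (θ : ℝ) (w : H4) :
    ⟪w, 1⟫ • (1 : H4) + ⟪w, qI⟫ • qI + ⟪w, e2 θ⟫ • e2 θ + ⟪w, e3 θ⟫ • e3 θ = w := by
  have pythagoras := Real.sin_sq_add_cos_sq θ
  apply Quaternion.ext
  all_goals
    simp only [quaternion_inner_eq, Quaternion.re_add, Quaternion.imI_add, Quaternion.imJ_add,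
      Quaternion.imK_add, Quaternion.re_smul, Quaternion.imI_smul, Quaternion.imJ_smul,
      Quaternion.imK_smul, smul_eq_mul]
    simp only [qI, e2_eq_mk, e3_eq_mk, Quaternion.re_one, Quaternion.imI_one, Quaternion.imJ_one,
      Quaternion.imK_one]
  · ring
  · ring
  · linear_combination w.imJ * pythagoras
  · linear_combination w.imK * pythagoras

theorem Dl_smul (θ : ℝ) {φ : H4 → ℝ} {g z : H4} {f : H4 → H4} (hφ : HasGradientAt φ g z)
    (hf : DifferentiableAt ℝ f z) :
    Dl θ (fun y => φ y • f y) z = φ z • Dl θ f z + g * f z := by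
  have fderiv_apply (h : H4) :
      fderiv ℝ (fun y => φ y • f y) z h = φ z • fderiv ℝ f z h + ⟪g, h⟫ • f z := by
    rw [(hφ.hasFDerivAt.fun_smul hf.hasFDerivAt).fderiv]
    simp
  have g_mul : g * f z = ⟪g, 1⟫ • f z + qI * (⟪g, qI⟫ • f z) + e2 θ * (⟪g, e2 θ⟫ • f z) +
      e3 θ * (⟪g, e3 θ⟫ • f z) := by
    conv_lhs => rw [← sum_inner_smul_θbasis θ g]
    simp only [add_mul, smul_mul_assoc, mul_smul_comm, one_mul]
  simp only [Dl, fderiv_apply, g_mul, mul_add, mul_smul_comm, smul_add]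
  abel

theorem Dlu_exp_inner_smul (θ : ℝ) (u w : H4) {f : H4 → H4} {z : H4}
    (hf : DifferentiableAt ℝ f z) :
    Dlu θ u (fun y => Real.exp ⟪w, y⟫ • f y) z = Real.exp ⟪w, z⟫ • Dlu θ (u + w) f z := by
  rw [Dlu, Dlu, Dl_smul θ (hasGradientAt_exp_inner w z) hf]
  simp only [smul_mul_assoc, mul_smul_comm, add_mul, smul_add]
  abel

theorem memLA_exp_inner_smul {θ : ℝ} {u w : H4} {Ω : Set H4} (hΩ : IsOpen Ω) {f : H4 → H4}
    (hf : memLA θ (u + w) Ω f) : memLA θ u Ω (fun y => Real.exp ⟪w, y⟫ • f y) := by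
  obtain ⟨contDiff, null_solution, integrable⟩ := hf
  refine ⟨?_, fun z hz => ?_, ?_⟩
  · have contDiff_exp : ContDiff ℝ 1 fun y : H4 => Real.exp ⟪w, y⟫ :=
      (contDiff_const.inner ℝ contDiff_id).exp
    exact contDiff_exp.contDiffOn.smul contDiff
  · have differentiable : DifferentiableAt ℝ f z :=
      (contDiff.differentiableOn one_ne_zero).differentiableAt (hΩ.mem_nhds hz)
    rw [Dlu_exp_inner_smul θ u w differentiable, null_solution z hz, smul_zero]
  · refine integrable.congr_fun (fun z _ => ?_) hΩ.measurableSet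
    have inner_u : ⟪u, z⟫ = ⟪u + w, z⟫ - ⟪w, z⟫ := by rw [inner_add_left, add_sub_cancel_right]
    simp only [innerθ_eq_inner]
    rw [inner_u, norm_exp_smul_sq_mul_exp]

/-- `K` reproduces the weighted Bergman space `{}_{λ^θ_u}𝒜(Ω)`. As in the paper, only the
reproducing formula is required, with the Bochner integral, whose value is `0` on a non-integrable
integrand. -/
def IsReproducingKernel (θ : ℝ) (u : H4) (Ω : Set H4) (K : H4 → H4 → H4) : Prop :=
  ∀ f : H4 → H4, memLA θ u Ω f → ∀ z ∈ Ω,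
    f z = ∫ ζ in Ω, Real.exp (2 * innerθ θ u ζ) • (K z ζ * f ζ)

theorem exp_smul_transferred_kernel_mul (θ : ℝ) (u v z ζ k x : H4) :
    Real.exp (2 * innerθ θ v ζ) • ((Real.exp (innerθ θ (u - v) (z + ζ)) • k) * x) =
      Real.exp ⟪u - v, z⟫ •
        (Real.exp (2 * innerθ θ u ζ) • (k * (Real.exp ⟪v - u, ζ⟫ • x))) := by
  simp only [innerθ_eq_inner, smul_mul_assoc, mul_smul_comm, smul_smul, ← Real.exp_add,
    inner_add_right, inner_sub_left]
  congr 2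
  ring

theorem statement10_general {Ω : Set H4} (hΩ : IsOpen Ω) (θ : ℝ) (u v : H4) {K : H4 → H4 → H4}
    (hK : IsReproducingKernel θ u Ω K) :
    IsReproducingKernel θ v Ω fun z ζ => Real.exp (innerθ θ (u - v) (z + ζ)) • K z ζ := by
  intro f hf z hz
  have transferred_mem : memLA θ u Ω fun y => Real.exp ⟪v - u, y⟫ • f y :=
    memLA_exp_inner_smul hΩ (by rwa [add_sub_cancel])
  have exp_cancel : Real.exp ⟪u - v, z⟫ * Real.exp ⟪v - u, z⟫ = 1 := by
    rw [← Real.exp_add, ← inner_add_left, sub_add_sub_cancel, sub_self, inner_zero_left,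
      Real.exp_zero]
  calc f z = Real.exp ⟪u - v, z⟫ • (Real.exp ⟪v - u, z⟫ • f z) := by
        rw [smul_smul, exp_cancel, one_smul]
    _ = Real.exp ⟪u - v, z⟫ • ∫ ζ in Ω,
          Real.exp (2 * innerθ θ u ζ) • (K z ζ * (Real.exp ⟪v - u, ζ⟫ • f ζ)) :=
        congrArg _ (hK _ transferred_mem z hz)
    _ = ∫ ζ in Ω, Real.exp (2 * innerθ θ v ζ) •
          ((Real.exp (innerθ θ (u - v) (z + ζ)) • K z ζ) * f ζ) := by
        rw [← integral_smul]
        simp only [exp_smul_transferred_kernel_mul]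

/-- transfer of the reproducing kernel between the weighted Bergman spaces:
`K_v(z,ζ) = e^{⟨u−v,z+ζ⟩_θ} K_u(z,ζ)` reproduces `{}_{λ^θ_v}𝒜(Ω)`. -/
theorem statement10 (Ω : Set H4) (hΩo : IsOpen Ω) (hΩc : IsConnected Ω)
    (θ : ℝ) (hθ : θ ∈ Set.Ico 0 (2 * Real.pi)) (u v : H4) (Ku : H4 → H4 → H4)
    (hKu : ∀ f : H4 → H4, memLA θ u Ω f → ∀ z ∈ Ω,
      f z = ∫ ζ in Ω, Real.exp (2 * innerθ θ u ζ) • (Ku z ζ * f ζ)) :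
    ∀ f : H4 → H4, memLA θ v Ω f → ∀ z ∈ Ω,
      f z = ∫ ζ in Ω, Real.exp (2 * innerθ θ v ζ) •
        ((Real.exp (innerθ θ (u - v) (z + ζ)) • Ku z ζ) * f ζ) :=
  statement10_general hΩo θ u v hKu

end
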